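/- Let n ≥ 9. The stabilizer problem on ℚⁿ is undecidable: there is no computable function which, given as input a finite list X of invertible n×n matrices with rational entries together with a vector u ∈ ℚⁿ, decides whether the stabilizer Stab_{⟨X⟩}(u) = {g ∈ ⟨X⟩ : g·u = u} is the trivial group, i.e. whether some non-identity element of the subgroup ⟨X⟩ generated by X fixes u. -/

import Mathlib

/-- Rational matrices are primcodable (natural effective encoding of matrices). -/
noncomputable instance matQPrimcodable (n : ℕ) :
    Primcodable (Matrix (Fin n) (Fin n) ℚ) :=
  Primcodable.finArrow

theorem Rat.mem_range_encode (m : ℕ) :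
    m ∈ Set.range (@Encodable.encode ℚ Rat.instEncodable) ↔
      0 < m.unpair.2 ∧ ((m.unpair.1 + 1) / 2).Coprime m.unpair.2 := by
  have natAbs_eq : ∀ z : ℤ, (Encodable.encode z + 1) / 2 = z.natAbs := by
    rintro (k | k)
    · change (2 * k + 1) / 2 = k; lia
    · change (2 * k + 1 + 1) / 2 = k + 1; lia
  constructor
  · rintro ⟨q, rfl⟩
    change 0 < (Nat.unpair (Nat.pair (Encodable.encode q.num) q.den)).2 ∧ Nat.Coprime
      (((Nat.unpair (Nat.pair (Encodable.encode q.num) q.den)).1 + 1) / 2)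
      (Nat.unpair (Nat.pair (Encodable.encode q.num) q.den)).2
    rw [Nat.unpair_pair]
    exact ⟨q.pos, by simpa only [natAbs_eq] using q.reduced⟩
  · rintro ⟨hpos, hcop⟩
    let z : ℤ := Denumerable.ofNat ℤ m.unpair.1
    have hz : Encodable.encode z = m.unpair.1 := Denumerable.encode_ofNat _
    refine ⟨⟨z, m.unpair.2, hpos.ne', by rwa [← natAbs_eq, hz]⟩, ?_⟩
    change Nat.pair (Encodable.encode z) m.unpair.2 = m
    rw [hz, Nat.pair_unpair]

theorem Primrec.nat_coprime : PrimrecRel Nat.Coprime := by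
  have hdvd : PrimrecRel fun e n : ℕ => n % e = 0 :=
    Primrec.eq.comp (Primrec.nat_mod.comp Primrec.snd Primrec.fst) (Primrec.const 0)
  have hbody : PrimrecRel fun (e : ℕ) (p : ℕ × ℕ) =>
      p.1 % e = 0 → p.2 % e = 0 → e = 1 := by
    have h1 : PrimrecPred fun q : ℕ × ℕ × ℕ => q.2.1 % q.1 = 0 :=
      hdvd.comp Primrec.fst (Primrec.fst.comp Primrec.snd)
    have h2 : PrimrecPred fun q : ℕ × ℕ × ℕ => q.2.2 % q.1 = 0 :=
      hdvd.comp Primrec.fst (Primrec.snd.comp Primrec.snd)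
    have h3 : PrimrecPred fun q : ℕ × ℕ × ℕ => q.1 = 1 :=
      Primrec.eq.comp Primrec.fst (Primrec.const 1)
    exact ((h1.not).or ((h2.not).or h3)).of_eq fun q => by tauto
  have hrange : Primrec fun p : ℕ × ℕ => List.range (p.1 + p.2).succ :=
    Primrec.list_range.comp (Primrec.succ.comp (Primrec.nat_add.comp Primrec.fst Primrec.snd))
  refine PrimrecPred.of_eq (hbody.forall_mem_list.comp hrange Primrec.id) ?_
  rintro ⟨a, b⟩
  simp only [id, List.mem_range, ← Nat.dvd_iff_mod_eq_zero, Nat.lt_succ_iff]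
  constructor
  · intro h
    rcases Nat.eq_zero_or_pos (a + b) with h0 | h0
    · obtain ⟨rfl, rfl⟩ : a = 0 ∧ b = 0 := by lia
      exact absurd (h 0 le_rfl (by simp) (by simp)) (by simp)
    · exact h _ (Nat.le_of_dvd h0 (dvd_add (Nat.gcd_dvd_left a b) (Nat.gcd_dvd_right a b)))
        (Nat.gcd_dvd_left a b) (Nat.gcd_dvd_right a b)
  · intro h e _ ha hb
    exact Nat.eq_one_of_dvd_coprimes h ha hb

theorem Primrec.rat_of_encode_num_den {α : Type*} [Primcodable α] {f : α → ℚ}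
    (hnum : Primrec fun a => Encodable.encode (f a).num) (hden : Primrec fun a => (f a).den) :
    Primrec f := by
  classical
  have hmem : PrimrecPred fun m : ℕ =>
      m ∈ Set.range (@Encodable.encode ℚ Rat.instEncodable) := by
    refine PrimrecPred.of_eq (PrimrecPred.and ?_ ?_) fun m => (Rat.mem_range_encode m).symm
    · exact Primrec.nat_lt.comp (Primrec.const 0) (Primrec.snd.comp Primrec.unpair)
    · exact Primrec.nat_coprime.comp (Primrec.nat_div.comp
        (Primrec.succ.comp (Primrec.fst.comp Primrec.unpair)) (Primrec.const 2))
        (Primrec.snd.comp Primrec.unpair)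
  have hcount := (Primrec.list_length.comp ((Primrec.listFilter hmem).comp
    (Primrec.list_range.comp (Primrec₂.natPair.comp hnum hden))))
  rw [← Primrec.encode_iff]
  refine hcount.of_eq fun a => ?_
  change _ = @List.countP ℕ (fun m => @decide
    (m ∈ Set.range (@Encodable.encode ℚ Rat.instEncodable)) (Encodable.decidableRangeEncode ℚ m))
    (List.range (Nat.pair (Encodable.encode (f a).num) (f a).den))
  rw [List.countP_eq_length_filter]
  congr!

theorem Primrec.encode_int_affine (c₀ c₁ : ℤ) :
    Primrec fun r : ℕ => Encodable.encode (c₀ + c₁ * r) := by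
  have hlin : ∀ a b : ℕ, Primrec fun r : ℕ => a + b * r := fun a b =>
    Primrec.nat_add.comp (Primrec.const a) (Primrec.nat_mul.comp (Primrec.const b) Primrec.id)
  have hp := hlin c₀.toNat c₁.toNat
  have hq := hlin (-c₀).toNat (-c₁).toNat
  refine Primrec.of_eq (Primrec.ite (Primrec.nat_le.comp hq hp)
    (Primrec.nat_mul.comp (Primrec.const 2) (Primrec.nat_sub.comp hp hq))
    (Primrec.pred.comp (Primrec.nat_mul.comp (Primrec.const 2) (Primrec.nat_sub.comp hq hp))))
    fun r => ?_
  have h0 : c₀ + c₁ * r = ((c₀.toNat + c₁.toNat * r : ℕ) : ℤ) -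
      (((-c₀).toNat + (-c₁).toNat * r : ℕ) : ℤ) := by
    push_cast
    rw [add_sub_add_comm, ← sub_mul, Int.toNat_sub_toNat_neg, Int.toNat_sub_toNat_neg]
  rw [h0]
  generalize c₀.toNat + c₁.toNat * r = p
  generalize (-c₀).toNat + (-c₁).toNat * r = q
  split_ifs with h
  · obtain ⟨k, rfl⟩ := Nat.exists_eq_add_of_le h
    rw [show ((q + k : ℕ) : ℤ) - q = Int.ofNat k by simp]
    change _ = 2 * k
    simp
  · obtain ⟨k, rfl⟩ := Nat.exists_eq_add_of_lt (not_le.mp h)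
    rw [show (p : ℤ) - (p + k + 1 : ℕ) = Int.negSucc k by
      rw [Int.negSucc_eq]; push_cast; ring]
    change _ = 2 * k + 1
    simp only [Nat.pred_eq_sub_one]
    lia

theorem Primrec.rat_affine (c₀ c₁ : ℤ) : Primrec fun r : ℕ => ((c₀ + c₁ * r : ℤ) : ℚ) :=
  Primrec.rat_of_encode_num_den
    (by simpa only [Rat.num_intCast] using Primrec.encode_int_affine c₀ c₁)
    (by simpa only [Rat.den_intCast] using Primrec.const 1)

theorem Primrec.pi_fin {α σ : Type*} [Primcodable α] [Primcodable σ] {n : ℕ}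
    {f : α → Fin n → σ} (hf : ∀ i, Primrec fun a => f a i) : Primrec f := by
  have h : Primrec₂ fun (i : Fin n) a => f a i := Primrec.fin_curry₁.2 hf
  exact Primrec.fin_curry.2 (h.comp Primrec.snd Primrec.fst)

section RewritingGroup

/-- The family of configurations `(state, a + d * k₁, b + e * k₂)`, for `k₁ k₂ : ℤ`. -/
structure ConfigFamily (J : Type*) where
  state : J
  d : ℕ
  e : ℕ
  a : Fin d
  b : Fin e

namespace ConfigFamily

variable {J : Type*} (P : ConfigFamily J)

/-- The pair of registers of the member of `P` with parameter `k`. -/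
def regs (k : ℤ × ℤ) : ℤ × ℤ := (P.a + P.d * k.1, P.b + P.e * k.2)

/-- The member of `P` with parameter `k`. -/
def point (k : ℤ × ℤ) : J × ℤ × ℤ := (P.state, P.regs k)

end ConfigFamily

/-- A system of reversible rules between families of configurations with two integer registers. -/
structure RegisterSystem (J R : Type*) where
  src : R → ConfigFamily J
  dst : R → ConfigFamily J
  base : Set J

namespace RegisterSystem

variable {J R : Type*} (S : RegisterSystem J R)

/-- The configurations connected to a base configuration `(j, 0, 0)`. -/
inductive Conn : J × ℤ × ℤ → Prop
  | base {j : J} : j ∈ S.base → Conn (j, 0, 0)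
  | fwd (i : R) (k : ℤ × ℤ) : Conn ((S.src i).point k) → Conn ((S.dst i).point k)
  | bwd (i : R) (k : ℤ × ℤ) : Conn ((S.dst i).point k) → Conn ((S.src i).point k)

/-- The letters of the group presentation attached to a register system. -/
inductive Letter (J R : Type*) where
  | x : Letter J R
  | y : Letter J R
  | k : Letter J R
  | t : J → Letter J R
  | r : R → Letter J R

instance [Finite J] [Finite R] : Finite (Letter J R) :=
  Finite.of_surjective (α := (Unit ⊕ Unit ⊕ Unit) ⊕ J ⊕ R)
    (Sum.elim (Sum.elim (fun _ => .x) (Sum.elim (fun _ => .y) (fun _ => .k))) (Sum.elim .t .r))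
    (by
      rintro (_ | _ | _ | j | i)
      · exact ⟨.inl (.inl ()), rfl⟩
      · exact ⟨.inl (.inr (.inl ())), rfl⟩
      · exact ⟨.inl (.inr (.inr ())), rfl⟩
      · exact ⟨.inr (.inl j), rfl⟩
      · exact ⟨.inr (.inr i), rfl⟩)

/-- The conjugate of `t j` by `x ^ v.1 * y ^ v.2` under an assignment `f` of the letters. -/
def shifted {G : Type*} [Group G] (f : Letter J R → G) (j : J) (v : ℤ × ℤ) : G :=
  MulAut.conj (f .x ^ v.1 * f .y ^ v.2) (f (.t j))

theorem map_conj_apply {G H : Type*} [Group G] [Group H] (φ : G →* H) (a b : G) :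
    φ (MulAut.conj a b) = MulAut.conj (φ a) (φ b) := by
  simp only [MulAut.conj_apply, map_mul, map_inv]

theorem map_shifted {G H : Type*} [Group G] [Group H] (φ : G →* H) (f : Letter J R → G) (j : J)
    (v : ℤ × ℤ) : φ (shifted f j v) = shifted (φ ∘ f) j v := by
  rw [shifted, map_conj_apply, map_mul φ, map_zpow φ, map_zpow φ]
  rfl

/-- The relations of the group attached to `S`, for an assignment `f` of the letters. -/
structure Satisfies {G : Type*} [Group G] (f : Letter J R → G) : Prop where
  x_y : Commute (f .x) (f .y)
  k_r : ∀ i, Commute (f .k) (f (.r i))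
  k_t : ∀ j ∈ S.base, Commute (f .k) (f (.t j))
  r_x : ∀ i, MulAut.conj (f (.r i)) (f .x ^ (S.src i).d) = f .x ^ (S.dst i).d
  r_y : ∀ i, MulAut.conj (f (.r i)) (f .y ^ (S.src i).e) = f .y ^ (S.dst i).e
  r_t : ∀ i, MulAut.conj (f (.r i)) (shifted f (S.src i).state ((S.src i).a, (S.src i).b)) =
    shifted f (S.dst i).state ((S.dst i).a, (S.dst i).b)

/-- The relators of the group attached to `S`. -/
def relators : Set (FreeGroup (Letter J R)) :=
  let f : Letter J R → FreeGroup (Letter J R) := FreeGroup.of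
  {MulAut.conj (f .x) (f .y) / f .y} ∪
    Set.range (fun i => MulAut.conj (f .k) (f (.r i)) / f (.r i)) ∪
    (fun j => MulAut.conj (f .k) (f (.t j)) / f (.t j)) '' S.base ∪
    Set.range (fun i => MulAut.conj (f (.r i)) (f .x ^ (S.src i).d) / f .x ^ (S.dst i).d) ∪
    Set.range (fun i => MulAut.conj (f (.r i)) (f .y ^ (S.src i).e) / f .y ^ (S.dst i).e) ∪
    Set.range (fun i =>
      MulAut.conj (f (.r i)) (shifted f (S.src i).state ((S.src i).a, (S.src i).b)) /
        shifted f (S.dst i).state ((S.dst i).a, (S.dst i).b))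

theorem finite_relators [Finite J] [Finite R] : S.relators.Finite :=
  (((((Set.finite_singleton _).union (Set.finite_range _)).union (Set.toFinite _)).union
    (Set.finite_range _)).union (Set.finite_range _)).union (Set.finite_range _)

theorem satisfies_iff {G : Type*} [Group G] (f : Letter J R → G) :
    S.Satisfies f ↔ ∀ w ∈ S.relators, FreeGroup.lift f w = 1 := by
  have hf : FreeGroup.lift f ∘ FreeGroup.of = f := by ext; simp
  simp only [relators, Set.mem_union, or_imp, forall_and, Set.forall_mem_range,
    Set.forall_mem_image, Set.mem_singleton_iff, forall_eq, map_div, div_eq_one, map_shifted,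
    map_conj_apply, map_pow (FreeGroup.lift f), FreeGroup.lift_apply_of, hf]
  have hc : ∀ a b : G, MulAut.conj a b = b ↔ Commute a b := fun a b => mul_inv_eq_iff_eq_mul
  simp only [hc]
  constructor
  · rintro ⟨h1, h2, h3, h4, h5, h6⟩
    exact ⟨⟨⟨⟨⟨h1, h2⟩, h3⟩, h4⟩, h5⟩, h6⟩
  · rintro ⟨⟨⟨⟨⟨h1, h2⟩, h3⟩, h4⟩, h5⟩, h6⟩
    exact ⟨h1, h2, h3, h4, h5, h6⟩

variable {S}

theorem shifted_regs {G : Type*} [Group G] {f : Letter J R → G}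
    (hxy : Commute (f .x) (f .y)) (P : ConfigFamily J) (k : ℤ × ℤ) :
    shifted f P.state (P.regs k) = MulAut.conj ((f .x ^ P.d) ^ k.1 * (f .y ^ P.e) ^ k.2)
      (shifted f P.state (P.a, P.b)) := by
  simp only [shifted, ConfigFamily.regs, ← MulAut.mul_apply, ← map_mul]
  congr 2
  have h : Commute ((f .y ^ P.e) ^ k.2) (f .x ^ ((P.a : ℕ) : ℤ)) :=
    ((hxy.symm.pow_left _).zpow_left _).zpow_right _
  rw [mul_assoc, ← mul_assoc _ (f .x ^ ((P.a : ℕ) : ℤ)), h.eq, add_comm, zpow_add, zpow_mul,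
    add_comm, zpow_add, zpow_mul, zpow_natCast (f .x) P.d, zpow_natCast (f .y) P.e]
  simp only [mul_assoc]

theorem Satisfies.conj_shifted {G : Type*} [Group G] {f : Letter J R → G} (h : S.Satisfies f)
    (i : R) (k : ℤ × ℤ) :
    MulAut.conj (f (.r i)) (shifted f (S.src i).state ((S.src i).regs k)) =
      shifted f (S.dst i).state ((S.dst i).regs k) := by
  rw [shifted_regs h.x_y, shifted_regs h.x_y, ← h.r_t, ← h.r_x, ← h.r_y, ← map_zpow, ← map_zpow,
    ← map_mul]
  exact map_conj_apply (MulAut.conj (f (.r i))).toMonoidHom _ _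

/-- In every group satisfying the relations, `k` commutes with the shifted letters of
connected configurations. -/
theorem Satisfies.commute_of_conn {G : Type*} [Group G] {f : Letter J R → G} (h : S.Satisfies f)
    {c : J × ℤ × ℤ} (hc : S.Conn c) : Commute (f .k) (shifted f c.1 c.2) := by
  induction hc with
  | base hj => simpa [shifted] using (h.k_t _ hj)
  | fwd i k _ ih =>
    have hk : MulAut.conj (f (.r i)) (f .k) = f .k := by
      rw [MulAut.conj_apply, ← (h.k_r i).eq,
        mul_inv_cancel_right]
    have := ih.map (MulAut.conj (f (.r i)))
    rwa [hk, ConfigFamily.point, h.conj_shifted] at this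
  | bwd i k _ ih =>
    have hk : MulAut.conj (f (.r i)) (f .k) = f .k := by
      rw [MulAut.conj_apply, ← (h.k_r i).eq,
        mul_inv_cancel_right]
    have h' : Commute (MulAut.conj (f (.r i)) (f .k)) (MulAut.conj (f (.r i))
        (shifted f (S.src i).state ((S.src i).regs k))) := by
      rw [hk, h.conj_shifted]; exact ih
    exact h'.of_map (MulAut.conj (f (.r i))).injective

/-! ### A permutation model in which unconnected configurations are detected by `k` -/

theorem exists_equiv_prod_of_fiber {A W I : Type*} (π : A → W)
    (h : ∀ w, Nonempty ({a // π a = w} ≃ I)) (a₀ : A) (i₀ : I) :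
    ∃ θ : A ≃ W × I, (∀ a, (θ a).1 = π a) ∧ θ a₀ = (π a₀, i₀) := by
  classical
  have h' : ∀ w, ∃ e : {a // π a = w} ≃ I, ∀ hw : π a₀ = w, e ⟨a₀, hw⟩ = i₀ := by
    intro w
    obtain ⟨e⟩ := h w
    by_cases hw : π a₀ = w
    · exact ⟨e.trans (Equiv.swap (e ⟨a₀, hw⟩) i₀), fun _ => by simp⟩
    · exact ⟨e, fun hw' => absurd hw' hw⟩
  choose e he using h'
  refine ⟨(Equiv.sigmaFiberEquiv π).symm.trans
    ((Equiv.sigmaCongrRight e).trans (Equiv.sigmaEquivProd W I)), fun a => rfl, ?_⟩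
  exact Prod.ext rfl (he _ rfl)

section Model

open Cardinal

/-- Points of the model: a subset of `ℤ × ℤ`, an index and a position. -/
abbrev ModelPoint : Type := (Set (ℤ × ℤ) × Set (ℤ × ℤ)) × ℤ × ℤ

/-- The marked points: those whose position belongs to their subset. -/
def Marked (p : ModelPoint) : Prop := p.2 ∈ p.1.1

/-- Translation of the position. -/
def translate (v : ℤ × ℤ) : Equiv.Perm ModelPoint :=
  Equiv.prodCongr (Equiv.refl _) (Equiv.addRight v)

theorem exists_model_chart (P : ConfigFamily J) (H : Set (ℤ × ℤ)) :
    ∃ E : Equiv.Perm ModelPoint, (∀ p, Marked (E p) ↔ Marked p) ∧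
      (∀ p, E (translate (P.d, 0) p) = translate (1, 0) (E p)) ∧
      (∀ p, E (translate (0, P.e) p) = translate (0, 1) (E p)) ∧
      E ((H, ∅), (P.a, P.b)) = (({k | P.regs k ∈ H}, ∅), 0) := by
  have : NeZero P.d := ⟨P.a.pos.ne'⟩
  have : NeZero P.e := ⟨P.b.pos.ne'⟩
  let D : ℤ × ℤ ≃ (ℤ × ℤ) × (Fin P.d × Fin P.e) :=
    (Equiv.prodCongr (Int.divModEquiv P.d) (Int.divModEquiv P.e)).trans
      (Equiv.prodProdProdComm _ _ _ _)
  have hD : ∀ k β, D.symm (k, β) = (k.1 * P.d + β.1, k.2 * P.e + β.2) := fun _ _ => rfl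
  let π : (Set (ℤ × ℤ) × Set (ℤ × ℤ)) × (Fin P.d × Fin P.e) → Set (ℤ × ℤ) :=
    fun q => {k | D.symm (k, q.2) ∈ q.1.1}
  have hfib : ∀ w, Nonempty ({q // π q = w} ≃ Set (ℤ × ℤ)) := by
    intro w
    refine Cardinal.eq.1 (le_antisymm ((mk_subtype_le _).trans ?_) ?_)
    · have h : Cardinal.mk (Set (ℤ × ℤ)) = 𝔠 := by simp
      have h0 : Cardinal.mk (Fin P.d × Fin P.e) ≤ 𝔠 :=
        (lt_aleph0_of_finite _).le.trans aleph0_le_continuum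
      rw [mk_prod, lift_id, lift_id, mk_prod, lift_id, h, continuum_mul_self]
      exact (mul_le_mul_right h0 _).trans continuum_mul_self.le
    · refine mk_le_of_injective (f := fun i => ⟨(({v | (D v).1 ∈ w}, i), (P.a, P.b)), ?_⟩) ?_
      · simp [π]
      · intro i i' h
        simpa using h
  obtain ⟨θ, hθ, hθ₀⟩ := exists_equiv_prod_of_fiber π hfib ((H, ∅), (P.a, P.b)) (∅ : Set (ℤ × ℤ))
  let E : Equiv.Perm ModelPoint :=
    ((Equiv.prodCongr (Equiv.refl _) D).trans
      { toFun := fun q => ((q.1, q.2.2), q.2.1)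
        invFun := fun q => (q.1.1, (q.2, q.1.2))
        left_inv := fun _ => rfl
        right_inv := fun _ => rfl }).trans (Equiv.prodCongr θ (Equiv.refl _))
  have hE : ∀ c k β, E (c, D.symm (k, β)) = (θ (c, β), k) := fun c k β => by simp [E]
  refine ⟨E, ?_, ?_, ?_, ?_⟩
  · rintro ⟨c, v⟩
    obtain ⟨⟨k, β⟩, rfl⟩ := D.symm.surjective v
    simp [hE, Marked, hθ, π]
  · rintro ⟨c, v⟩
    obtain ⟨⟨k, β⟩, rfl⟩ := D.symm.surjective v
    have : translate (P.d, 0) (c, D.symm (k, β)) = (c, D.symm (k + (1, 0), β)) := by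
      ext1
      · rfl
      · ext <;> simp [translate, hD]; ring
    rw [this, hE, hE]
    rfl
  · rintro ⟨c, v⟩
    obtain ⟨⟨k, β⟩, rfl⟩ := D.symm.surjective v
    have : translate (0, P.e) (c, D.symm (k, β)) = (c, D.symm (k + (0, 1), β)) := by
      ext1
      · rfl
      · ext <;> simp [translate, hD]; ring
    rw [this, hE, hE]
    rfl
  · have h0 : ((P.a : ℤ), (P.b : ℤ)) = D.symm (0, (P.a, P.b)) := by simp [hD]
    rw [h0, hE, hθ₀]
    refine Prod.ext (Prod.ext ?_ rfl) rfl
    ext k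
    simp [π, hD, ConfigFamily.regs, mul_comm, add_comm]

variable (S)

/-- The model point attached to a configuration. -/
def modelPoint (c : J × ℤ × ℤ) : ModelPoint := (({v | S.Conn (c.1, v)}, ∅), c.2)

theorem marked_modelPoint (c : J × ℤ × ℤ) : Marked (S.modelPoint c) ↔ S.Conn c := Iff.rfl

theorem conn_src_iff_dst (i : R) (k : ℤ × ℤ) :
    S.Conn ((S.src i).point k) ↔ S.Conn ((S.dst i).point k) := ⟨.fwd i k, .bwd i k⟩

theorem exists_model_rule (i : R) :
    ∃ ρ : Equiv.Perm ModelPoint, (∀ p, Marked (ρ p) ↔ Marked p) ∧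
      ρ * translate ((S.src i).d, 0) * ρ⁻¹ = translate ((S.dst i).d, 0) ∧
      ρ * translate (0, (S.src i).e) * ρ⁻¹ = translate (0, (S.dst i).e) ∧
      ρ (S.modelPoint ((S.src i).state, (S.src i).a, (S.src i).b)) =
        S.modelPoint ((S.dst i).state, (S.dst i).a, (S.dst i).b) := by
  obtain ⟨E, hE, hEx, hEy, hE₀⟩ :=
    exists_model_chart (S.src i) {v | S.Conn ((S.src i).state, v)}
  obtain ⟨F, hF, hFx, hFy, hF₀⟩ :=
    exists_model_chart (S.dst i) {v | S.Conn ((S.dst i).state, v)}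
  refine ⟨F⁻¹ * E, fun p => ?_, ?_, ?_, ?_⟩
  · rw [← hF, ← hE p]
    simp
  · refine mul_inv_eq_of_eq_mul (Equiv.ext fun p => F.injective ?_)
    simp [hEx, hFx]
  · refine mul_inv_eq_of_eq_mul (Equiv.ext fun p => F.injective ?_)
    simp [hEy, hFy]
  · apply F.injective
    rw [Equiv.Perm.mul_apply, modelPoint, modelPoint, hE₀, hF₀, Equiv.Perm.inv_def,
      Equiv.apply_symm_apply]
    exact Prod.ext (Prod.ext (Set.ext fun k => S.conn_src_iff_dst i k) rfl) rfl

open Classical in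
/-- The letter `t` of the model: a shift of an integer coordinate over the point `p`. -/
noncomputable def modelShift (p : ModelPoint) (n : ℤ) : Equiv.Perm (ModelPoint × Bool × ℤ) where
  toFun q := if q.1 = p ∧ q.2.1 = false then (q.1, q.2.1, q.2.2 + n) else q
  invFun q := if q.1 = p ∧ q.2.1 = false then (q.1, q.2.1, q.2.2 - n) else q
  left_inv := by rintro ⟨p', b, m⟩; dsimp only; split_ifs <;> simp_all
  right_inv := by rintro ⟨p', b, m⟩; dsimp only; split_ifs <;> simp_all

open Classical in
theorem modelShift_apply (p : ModelPoint) (n : ℤ) (q : ModelPoint × Bool × ℤ) :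
    modelShift p n q = if q.1 = p ∧ q.2.1 = false then (q.1, q.2.1, q.2.2 + n) else q := rfl

theorem modelShift_add (p : ModelPoint) (m n : ℤ) :
    modelShift p (m + n) = modelShift p m * modelShift p n := by
  ext1 ⟨p', b, l⟩
  simp only [modelShift_apply, Equiv.Perm.mul_apply]
  split_ifs with h <;> simp_all
  ring

theorem modelShift_zpow (p : ModelPoint) (n : ℤ) : modelShift p 1 ^ n = modelShift p n := by
  let φ : Multiplicative ℤ →* Equiv.Perm (ModelPoint × Bool × ℤ) :=
    MonoidHom.mk' (fun n => modelShift p n.toAdd) fun m n => modelShift_add p _ _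
  have h := map_zpow φ (Multiplicative.ofAdd 1) n
  rw [← ofAdd_zsmul, smul_eq_mul, mul_one] at h
  exact h.symm

open Classical in
/-- The letter `k` of the model: it swaps the two sheets over every point that is not marked. -/
noncomputable def sheetSwap : Equiv.Perm (ModelPoint × Bool × ℤ) :=
  Function.Involutive.toPerm (fun q => if Marked q.1 then q else (q.1, !q.2.1, q.2.2)) <| by
    rintro ⟨p, b, m⟩; dsimp only; split_ifs <;> simp_all

open Classical in
theorem sheetSwap_apply (q : ModelPoint × Bool × ℤ) :
    sheetSwap q = if Marked q.1 then q else (q.1, !q.2.1, q.2.2) := rfl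

/-- Permutations of the model points act on the first coordinate. -/
def liftPerm : Equiv.Perm ModelPoint →* Equiv.Perm (ModelPoint × Bool × ℤ) :=
  MonoidHom.mk' (fun g => Equiv.prodCongr g (Equiv.refl _)) fun _ _ => rfl

theorem liftPerm_apply (g : Equiv.Perm ModelPoint) (q : ModelPoint × Bool × ℤ) :
    liftPerm g q = (g q.1, q.2) := rfl

theorem conj_modelShift (g : Equiv.Perm ModelPoint) (p : ModelPoint) (n : ℤ) :
    MulAut.conj (liftPerm g) (modelShift p n) = modelShift (g p) n := by
  refine mul_inv_eq_of_eq_mul (Equiv.ext fun q => ?_)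
  simp only [modelShift_apply, Equiv.Perm.mul_apply, liftPerm_apply,
    EmbeddingLike.apply_eq_iff_eq]
  split_ifs <;> rfl

theorem commute_sheetSwap_liftPerm {g : Equiv.Perm ModelPoint}
    (hg : ∀ p, Marked (g p) ↔ Marked p) : Commute sheetSwap (liftPerm g) := by
  refine Equiv.ext fun q => ?_
  by_cases hq : Marked q.1 <;>
    simp [sheetSwap_apply, Equiv.Perm.mul_apply, liftPerm_apply, hg, hq]

theorem commute_sheetSwap_modelShift {p : ModelPoint} (hp : Marked p) (n : ℤ) :
    Commute sheetSwap (modelShift p n) := by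
  refine Equiv.ext fun ⟨p', b, l⟩ => ?_
  simp only [sheetSwap_apply, Equiv.Perm.mul_apply, modelShift_apply]
  by_cases hq : p' = p
  · split_ifs <;> simp_all
  · by_cases hm : Marked p' <;> simp [hq, hm]

theorem eq_zero_of_modelShift_eq_conj {p : ModelPoint} (hp : ¬ Marked p) {m n : ℤ}
    (h : modelShift p m = MulAut.conj sheetSwap (modelShift p n)) : m = 0 ∧ n = 0 := by
  have h' : modelShift p m * sheetSwap = sheetSwap * modelShift p n :=
    eq_mul_inv_iff_mul_eq.1 h
  have h₁ := congrArg (fun f => (f (p, true, 0)).2.2) h'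
  have h₂ := congrArg (fun f => (f (p, false, 0)).2.2) h'
  simp [sheetSwap_apply, modelShift_apply, hp] at h₁ h₂
  exact ⟨h₁, h₂.symm⟩

theorem translate_add (v w : ℤ × ℤ) : translate (v + w) = translate v * translate w := by
  ext1 p
  exact Prod.ext rfl (by simp [translate, add_comm v, add_assoc])

theorem translate_pow (v : ℤ × ℤ) (n : ℕ) : translate v ^ n = translate (n • v) := by
  induction n with
  | zero => ext1 p; simp [translate]
  | succ n ih => rw [pow_succ, ih, succ_nsmul, translate_add]

theorem translate_zpow (v : ℤ × ℤ) (n : ℤ) : translate v ^ n = translate (n • v) := by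
  let φ : Multiplicative (ℤ × ℤ) →* Equiv.Perm ModelPoint :=
    MonoidHom.mk' (fun v => translate v.toAdd) fun _ _ => translate_add _ _
  have h := map_zpow φ (Multiplicative.ofAdd v) n
  rw [← ofAdd_zsmul] at h
  exact h.symm

/-- If a configuration is not connected to the base, some group satisfying the relations
separates the powers of its shifted letter from their conjugates by `k`. -/
theorem exists_satisfies_of_not_conn {c : J × ℤ × ℤ} (hc : ¬ S.Conn c) :
    ∃ f : Letter J R → Equiv.Perm (ModelPoint × Bool × ℤ), S.Satisfies f ∧ ∀ m n : ℤ,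
      shifted f c.1 c.2 ^ m = MulAut.conj (f .k) (shifted f c.1 c.2 ^ n) → m = 0 ∧ n = 0 := by
  choose ρ hρ hρx hρy hρ₀ using S.exists_model_rule
  let f : Letter J R → Equiv.Perm (ModelPoint × Bool × ℤ)
    | .x => liftPerm (translate (1, 0))
    | .y => liftPerm (translate (0, 1))
    | .k => sheetSwap
    | .t j => modelShift (S.modelPoint (j, 0)) 1
    | .r i => liftPerm (ρ i)
  have hf : ∀ j v, shifted f j v = modelShift (S.modelPoint (j, v)) 1 := by
    intro j v
    change MulAut.conj (liftPerm _ ^ v.1 * liftPerm _ ^ v.2) (modelShift _ 1) = _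
    rw [← map_zpow, ← map_zpow, ← map_mul, conj_modelShift, translate_zpow, translate_zpow,
      ← translate_add]
    congr 1
    simp [translate, modelPoint]
  refine ⟨f, ⟨?_, fun i => ?_, fun j hj => ?_, fun i => ?_, fun i => ?_, fun i => ?_⟩,
    fun m n h => ?_⟩
  · refine Commute.map ?_ liftPerm
    rw [Commute, SemiconjBy, ← translate_add, ← translate_add, add_comm]
  · exact commute_sheetSwap_liftPerm (hρ i)
  · exact commute_sheetSwap_modelShift (p := S.modelPoint (j, 0)) (Conn.base hj) 1
  · change MulAut.conj (liftPerm _) (liftPerm _ ^ _) = liftPerm _ ^ _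
    rw [← map_pow, ← map_pow, ← map_conj_apply, translate_pow, translate_pow]
    simpa using congrArg liftPerm (hρx i)
  · change MulAut.conj (liftPerm _) (liftPerm _ ^ _) = liftPerm _ ^ _
    rw [← map_pow, ← map_pow, ← map_conj_apply, translate_pow, translate_pow]
    simpa using congrArg liftPerm (hρy i)
  · rw [hf, hf]
    exact (conj_modelShift _ _ _).trans (by rw [hρ₀])
  · rw [hf, modelShift_zpow, modelShift_zpow] at h
    exact eq_zero_of_modelShift_eq_conj (mt (S.marked_modelPoint c).1 hc) h

end Model

end RegisterSystem

end RewritingGroup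

section Shear

open Matrix MatrixGroups Pointwise

/-- The unipotent matrix that fixes `(1, s)` and adds to `v` the multiple `c * (v 1 - s * v 0)`
of `(1, s)`. -/
def shear (s c : ℚ) : SL(2, ℚ) :=
  ⟨!![1 - c * s, c; -(c * s ^ 2), 1 + c * s], by rw [det_fin_two_of]; ring⟩

theorem coe_shear (s c : ℚ) :
    (shear s c : Matrix (Fin 2) (Fin 2) ℚ) = !![1 - c * s, c; -(c * s ^ 2), 1 + c * s] := rfl

theorem shear_mulVec (s c : ℚ) (v : Fin 2 → ℚ) :
    (shear s c : Matrix (Fin 2) (Fin 2) ℚ) *ᵥ v =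
      ![v 0 + c * (v 1 - s * v 0), v 1 + c * s * (v 1 - s * v 0)] := by
  ext i
  fin_cases i <;> simp [coe_shear, mulVec, dotProduct, Fin.sum_univ_two] <;> ring

theorem shear_add (s c d : ℚ) : shear s (c + d) = shear s c * shear s d := by
  apply Matrix.SpecialLinearGroup.ext
  intro i j
  rw [Matrix.SpecialLinearGroup.coe_mul, coe_shear, coe_shear, coe_shear, mul_fin_two]
  fin_cases i <;> fin_cases j <;> simp <;> ring

theorem shear_zpow (s c : ℚ) (n : ℤ) : shear s c ^ n = shear s (n * c) := by
  let φ : Multiplicative ℚ →* SL(2, ℚ) :=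
    MonoidHom.mk' (fun c => shear s c.toAdd) fun c d => shear_add s _ _
  have h := map_zpow φ (Multiplicative.ofAdd c) n
  rw [← ofAdd_zsmul, zsmul_eq_mul] at h
  exact h.symm

theorem shear_inv (s c : ℚ) : (shear s c)⁻¹ = shear s (-c) := by
  simpa using shear_zpow s c (-1)

theorem exists_eq_shear_of_fixes {A : SL(2, ℚ)} {s : ℚ}
    (h : (A : Matrix (Fin 2) (Fin 2) ℚ) *ᵥ ![1, s] = ![1, s]) : ∃ c, A = shear s c := by
  have h0 := congrFun h 0
  have h1 := congrFun h 1
  have hdet := A.det_coe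
  rw [det_fin_two] at hdet
  simp [mulVec, dotProduct, Fin.sum_univ_two] at h0 h1
  refine ⟨A 0 1, Matrix.SpecialLinearGroup.ext _ _ fun i j => ?_⟩
  have e00 : A 0 0 = 1 - A 0 1 * s := by linarith
  have e10 : A 1 0 = s - A 1 1 * s := by linarith
  have e11 : A 1 1 = 1 + A 0 1 * s := by
    rw [e00, e10] at hdet; linarith
  rw [e11] at e10
  rw [coe_shear]
  fin_cases i <;> fin_cases j <;> simp [e00, e10, e11]
  ring

theorem exists_pow_eq_zpow_of_fixes {A : SL(2, ℚ)} {s c : ℚ} (hc : c ≠ 0)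
    (h : (A : Matrix (Fin 2) (Fin 2) ℚ) *ᵥ ![1, s] = ![1, s]) :
    ∃ m n : ℤ, m ≠ 0 ∧ A ^ m = shear s c ^ n := by
  obtain ⟨d, rfl⟩ := exists_eq_shear_of_fixes h
  refine ⟨(d / c).den, (d / c).num, by exact_mod_cast (d / c).den_nz, ?_⟩
  rw [shear_zpow, shear_zpow]
  congr 1
  have := Rat.den_mul_eq_num (d / c)
  push_cast
  rw [← this]
  field_simp

/-- Shears along the vectors `(1, s)`, for distinct integers `s`, generate a free group. -/
theorem injective_lift_shear {ι : Type} [Nontrivial ι] {s : ι → ℤ} (hs : Function.Injective s) :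
    Function.Injective (FreeGroup.lift fun i => shear (s i) 6) := by
  let w : ι → SL(2, ℚ) → ℚ := fun i g => g 1 0 - s i * g 0 0
  let X : ι → Set SL(2, ℚ) := fun i => {g | 3 * w i g ^ 2 ≤ g 0 0 * w i g}
  let Y : ι → Set SL(2, ℚ) := fun i => {g | g 0 0 * w i g < -(3 * w i g ^ 2)}
  have hbigX : ∀ i, ∀ g ∈ X i, 3 * |w i g| ≤ |g 0 0| := by
    intro i g hg
    rcases eq_or_ne (w i g) 0 with h0 | h0
    · simp [h0]
    · refine le_of_mul_le_mul_right ?_ (abs_pos.2 h0)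
      rw [mul_assoc, abs_mul_abs_self, ← abs_mul, ← sq]
      exact le_trans hg (le_abs_self _)
  have hbigY : ∀ i, ∀ g ∈ Y i, 3 * |w i g| ≤ |g 0 0| := by
    intro i g hg
    rcases eq_or_ne (w i g) 0 with h0 | h0
    · simp [h0]
    · refine le_of_mul_le_mul_right ?_ (abs_pos.2 h0)
      rw [mul_assoc, abs_mul_abs_self, ← abs_mul, ← sq]
      exact le_trans (le_neg_of_le_neg hg.le) (neg_le_abs _)
  have hbig : ∀ {i j}, i ≠ j → ∀ g : SL(2, ℚ), 3 * |w i g| ≤ |g 0 0| → ¬ 3 * |w j g| ≤ |g 0 0| := by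
    intro i j hij g hi hj
    have hdiff : w i g - w j g = (s j - s i : ℤ) * g 0 0 := by simp only [w]; push_cast; ring
    have h1 : (1 : ℚ) ≤ |((s j - s i : ℤ) : ℚ)| := by
      exact_mod_cast Int.one_le_abs (sub_ne_zero.2 (hs.ne hij.symm))
    have h2 : |((s j - s i : ℤ) : ℚ)| * |g 0 0| ≤ |w i g| + |w j g| := by
      rw [← abs_mul, ← hdiff]; exact abs_sub _ _
    have h3 : |g 0 0| = 0 := by nlinarith [abs_nonneg (g 0 0)]
    have h4 : |w i g| = 0 := by nlinarith [abs_nonneg (w i g)]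
    have hdet := g.det_coe
    rw [abs_eq_zero] at h3 h4
    simp only [w, h3] at h4
    rw [det_fin_two, h3, show g 1 0 = 0 by linarith] at hdet
    norm_num at hdet
  have hw : ∀ i c g, w i (shear (s i) c * g) = w i g := by
    intro i c g
    simp [w, Matrix.mul_apply, Fin.sum_univ_two, coe_shear]; ring
  have h00 : ∀ i c g, (shear (s i) c * g) 0 0 = g 0 0 + c * w i g := by
    intro i c g
    simp [w, Matrix.mul_apply, Fin.sum_univ_two, coe_shear]; ring
  refine FreeGroup.injective_lift_of_ping_pong (fun i => shear (s i) 6) X Y ?_ ?_ ?_ ?_ ?_ ?_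
  · intro i
    refine ⟨⟨!![1, 0; s i, 1], by simp⟩, ?_⟩
    change 3 * ((s i : ℚ) - s i * 1) ^ 2 ≤ 1 * ((s i : ℚ) - s i * 1)
    simp
  · exact fun i j hij => Set.disjoint_left.2 fun g hi hj => hbig hij g (hbigX i g hi) (hbigX j g hj)
  · exact fun i j hij => Set.disjoint_left.2 fun g hi hj => hbig hij g (hbigY i g hi) (hbigY j g hj)
  · refine fun i j => Set.disjoint_left.2 fun g hi hj => ?_
    rcases eq_or_ne i j with rfl | hij
    · have h1 : 3 * w i g ^ 2 ≤ g 0 0 * w i g := hi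
      have h2 : g 0 0 * w i g < -(3 * w i g ^ 2) := hj
      nlinarith [sq_nonneg (w i g)]
    · exact hbig hij g (hbigX i g hi) (hbigY j g hj)
  · rintro i _ ⟨g, hg, rfl⟩
    have hg' : ¬ g 0 0 * w i g < -(3 * w i g ^ 2) := hg
    change 3 * w i (shear (s i) 6 * g) ^ 2 ≤ (shear (s i) 6 * g) 0 0 * w i (shear (s i) 6 * g)
    rw [hw, h00]
    nlinarith
  · rintro i _ ⟨g, hg, rfl⟩
    have hg' : ¬ 3 * w i g ^ 2 ≤ g 0 0 * w i g := hg
    change (shear (s i) 6)⁻¹ * g ∈ Y i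
    change ((shear (s i) 6)⁻¹ * g) 0 0 * w i ((shear (s i) 6)⁻¹ * g) <
      -(3 * w i ((shear (s i) 6)⁻¹ * g) ^ 2)
    rw [shear_inv, hw, h00]
    nlinarith

end Shear

section FibreProduct

variable {ι H : Type*} [Group H] (φ : FreeGroup ι →* H) (R : Set (FreeGroup ι))

/-- Generators of the fibre square of `FreeGroup ι` over the group presented by `R`, mapped by
`φ` on both sides. -/
def fibreSquareGenerators : Set (H × H) :=
  Set.range (fun i => (φ (.of i), φ (.of i))) ∪ (fun w => (φ w, 1)) '' R

variable {R}

theorem finite_fibreSquareGenerators [Finite ι] (hR : R.Finite) :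
    (fibreSquareGenerators φ R).Finite :=
  (Set.finite_range _).union (hR.image _)

variable {φ}

theorem exists_of_mem_closure_fibreSquareGenerators {Q : Type*} [Group Q] (q : FreeGroup ι →* Q)
    (hq : ∀ w ∈ R, q w = 1) {g : H × H}
    (hg : g ∈ Subgroup.closure (fibreSquareGenerators φ R)) :
    ∃ α β, (φ α, φ β) = g ∧ q α = q β := by
  have hle : Subgroup.closure (fibreSquareGenerators φ R) ≤
      ((q.comp (MonoidHom.fst _ _)).eqLocus (q.comp (MonoidHom.snd _ _))).map (φ.prodMap φ) := by
    refine (Subgroup.closure_le _).2 ?_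
    rintro _ (⟨i, rfl⟩ | ⟨w, hw, rfl⟩)
    · exact ⟨(.of i, .of i), rfl, rfl⟩
    · exact ⟨(w, 1), (hq w hw).trans (map_one q).symm, by simp⟩
  obtain ⟨⟨α, β⟩, h, rfl⟩ := hle hg
  exact ⟨α, β, rfl, h⟩

theorem mem_closure_fibreSquareGenerators {α β : FreeGroup ι}
    (h : α / β ∈ Subgroup.normalClosure R) :
    (φ α, φ β) ∈ Subgroup.closure (fibreSquareGenerators φ R) := by
  set L := Subgroup.closure (fibreSquareGenerators φ R) with hL
  have hdiag : ∀ γ, (φ γ, φ γ) ∈ L := by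
    intro γ
    induction γ using FreeGroup.induction_on with
    | C1 => rw [map_one φ]; exact one_mem L
    | of i => exact Subgroup.subset_closure (.inl ⟨i, rfl⟩)
    | inv_of i hi => simpa using inv_mem hi
    | mul a b ha hb => simpa using mul_mem ha hb
  let N : Subgroup (FreeGroup ι) := L.comap ((MonoidHom.inl H H).comp φ)
  have hN : N.Normal := ⟨fun n hn γ => by
    have := mul_mem (mul_mem (hdiag γ) hn) (inv_mem (hdiag γ))
    simpa [N] using this⟩
  have hmem : (φ (α / β), 1) ∈ L :=
    Subgroup.normalClosure_le_normal (N := N)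
      (fun w hw => Subgroup.subset_closure (.inr ⟨w, hw, rfl⟩)) h
  simpa using mul_mem hmem (hdiag β)

end FibreProduct

section StabilizerCriterion

open Matrix MatrixGroups RegisterSystem

variable {ι : Type} {s : ι → ℤ}

theorem exists_pow_eq_conj_of_fixes [Nontrivial ι] (hs : Function.Injective s) (i : ι)
    {α w : FreeGroup ι} {φ : FreeGroup ι →* SL(2, ℚ)}
    (hφ : φ = FreeGroup.lift fun i => shear (s i) 6)
    (h : (φ α).1 *ᵥ ((φ w).1 *ᵥ ![1, (s i : ℚ)]) = (φ w).1 *ᵥ ![1, (s i : ℚ)]) :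
    ∃ m n : ℤ, m ≠ 0 ∧ α ^ m = MulAut.conj w (.of i) ^ n := by
  have hfix : (φ (w⁻¹ * α * w)).1 *ᵥ ![1, (s i : ℚ)] = ![1, (s i : ℚ)] := by
    have h' := congrArg ((φ w⁻¹).1 *ᵥ ·) h
    simp only [mulVec_mulVec] at h'
    have hmul : ∀ a b, (φ a).1 * (φ b).1 = (φ (a * b)).1 := fun a b => by
      rw [map_mul, Matrix.SpecialLinearGroup.coe_mul]
    rw [hmul, hmul, hmul, inv_mul_cancel, ← mul_assoc] at h'
    simpa using h'
  obtain ⟨m, n, hm, hmn⟩ := exists_pow_eq_zpow_of_fixes (c := 6) (by norm_num) hfix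
  refine ⟨m, n, hm, ?_⟩
  have hinj : Function.Injective φ := hφ ▸ injective_lift_shear hs
  have hi : shear (s i) 6 = φ (.of i) := by simp [hφ]
  rw [hi, ← map_zpow, ← map_zpow] at hmn
  have := congrArg (MulAut.conj w) (hinj hmn)
  rw [map_zpow, map_zpow] at this
  simpa [mul_assoc] using this

theorem conj_fixes (i : ι) (w : FreeGroup ι) {φ : FreeGroup ι →* SL(2, ℚ)}
    (hφ : φ = FreeGroup.lift fun i => shear (s i) 6) :
    (φ (MulAut.conj w (.of i))).1 *ᵥ ((φ w).1 *ᵥ ![1, (s i : ℚ)]) =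
      (φ w).1 *ᵥ ![1, (s i : ℚ)] := by
  have hi : (φ (.of i)).1 *ᵥ ![1, (s i : ℚ)] = ![1, (s i : ℚ)] := by
    rw [hφ, FreeGroup.lift_apply_of]
    exact (shear_mulVec _ _ _).trans (by simp)
  have h : φ (MulAut.conj w (.of i)) * φ w = φ w * φ (.of i) := by
    rw [← map_mul, ← map_mul]; simp
  have h' : (φ (MulAut.conj w (.of i))).1 * (φ w).1 = (φ w).1 * (φ (.of i)).1 :=
    congrArg Subtype.val h
  rw [mulVec_mulVec, h', ← mulVec_mulVec, hi]

instance {J R : Type*} : Nontrivial (Letter J R) := ⟨⟨.x, .y, by simp⟩⟩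

variable {J R : Type} (S : RegisterSystem J R)

theorem conn_iff_exists_fixes {s : Letter J R → ℤ} (hs : Function.Injective s)
    {φ : FreeGroup (Letter J R) →* SL(2, ℚ)} (hφ : φ = FreeGroup.lift fun i => shear (s i) 6)
    (j : J) (v : ℤ × ℤ) {w : FreeGroup (Letter J R)} (hw : w = .of .x ^ v.1 * .of .y ^ v.2) :
    S.Conn (j, v) ↔ ∃ g ∈ Subgroup.closure (fibreSquareGenerators φ S.relators), g ≠ 1 ∧
      g.1.1 *ᵥ ((φ w).1 *ᵥ ![1, (s (.t j) : ℚ)]) = (φ w).1 *ᵥ ![1, (s (.t j) : ℚ)] ∧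
      g.2.1 *ᵥ ((φ (.of .k * w)).1 *ᵥ ![1, (s (.t j) : ℚ)]) =
        (φ (.of .k * w)).1 *ᵥ ![1, (s (.t j) : ℚ)] := by
  have hz : shifted FreeGroup.of j v = MulAut.conj w (.of (.t j)) := by rw [hw]; rfl
  constructor
  · intro hc
    refine ⟨(φ (MulAut.conj w (.of (.t j))), φ (MulAut.conj (.of .k * w) (.of (.t j)))),
      mem_closure_fibreSquareGenerators ?_, ?_, conj_fixes _ _ hφ, conj_fixes _ _ hφ⟩
    · let q := QuotientGroup.mk' (Subgroup.normalClosure S.relators)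
      have hsat : S.Satisfies (q ∘ FreeGroup.of) := by
        refine (S.satisfies_iff _).2 fun r hr => ?_
        have : FreeGroup.lift (q ∘ FreeGroup.of) = q := by ext; simp
        rw [this]
        exact (QuotientGroup.eq_one_iff _).2 (Subgroup.subset_normalClosure hr)
      have hcomm := hsat.commute_of_conn hc
      rw [← map_shifted, hz] at hcomm
      refine (QuotientGroup.eq_one_iff _).1 ?_
      change q _ = 1
      have : q (MulAut.conj (.of .k) (MulAut.conj w (.of (.t j)))) =
          q (MulAut.conj w (.of (.t j))) := by
        rw [map_conj_apply]
        exact mul_inv_eq_of_eq_mul hcomm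
      rw [map_div, div_eq_one, ← this, map_mul, MulAut.mul_apply]
    · intro h
      have hinj : Function.Injective φ := hφ ▸ injective_lift_shear hs
      have h1 := hinj ((congrArg Prod.fst h).trans (map_one φ).symm)
      exact FreeGroup.of_ne_one _ ((MulEquiv.map_eq_one_iff _).1 h1)
  · rintro ⟨g, hg, hg1, hfix1, hfix2⟩
    by_contra hc
    obtain ⟨f, hf, hsep⟩ := S.exists_satisfies_of_not_conn hc
    set q := FreeGroup.lift f with hq
    obtain ⟨α, β, rfl, hαβ⟩ :=
      exists_of_mem_closure_fibreSquareGenerators q ((S.satisfies_iff f).1 hf) hg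
    obtain ⟨a, b, ha, hab⟩ := exists_pow_eq_conj_of_fixes hs _ hφ hfix1
    obtain ⟨a', b', ha', hab'⟩ := exists_pow_eq_conj_of_fixes hs _ hφ hfix2
    have hqz : q (MulAut.conj w (.of (.t j))) = shifted f j v := by
      rw [← hz, map_shifted]
      exact congrArg (shifted · j v) (funext fun l => by simp [hq])
    have hqk : q (MulAut.conj (.of .k * w) (.of (.t j))) =
        MulAut.conj (f .k) (shifted f j v) := by
      rw [map_mul MulAut.conj, MulAut.mul_apply, map_conj_apply, hqz]; simp [hq]
    have h1 : q α ^ a = shifted f j v ^ b := by rw [← map_zpow, hab, map_zpow, hqz]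
    have h2 : q β ^ a' = MulAut.conj (f .k) (shifted f j v ^ b') := by
      rw [← map_zpow, hab', map_zpow, hqk, ← map_zpow]
    obtain ⟨h3, h4⟩ := hsep (b * a') (b' * a) (by
      rw [_root_.zpow_mul, ← h1, _root_.zpow_mul, map_zpow, ← h2, ← hαβ, ← _root_.zpow_mul,
        ← _root_.zpow_mul, mul_comm])
    have hb : b = 0 := by simpa [ha'] using h3
    have hb' : b' = 0 := by simpa [ha] using h4
    rw [hb, zpow_zero] at hab
    rw [hb', zpow_zero] at hab'
    have hα : α = 1 := (IsMulTorsionFree.zpow_eq_one_iff_left ha).1 hab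
    have hβ : β = 1 := (IsMulTorsionFree.zpow_eq_one_iff_left ha').1 hab'
    exact hg1 (by simp [hα, hβ])

/-- Connectedness of the configurations `(j, 0, r)` is equivalent to the existence of a nontrivial
stabilizer of a vector that depends affinely on `r`. -/
theorem exists_generators_conn_iff_fixes [Finite J] [Finite R] (j : J) :
    ∃ X : Set (SL(2, ℚ) × SL(2, ℚ)), X.Finite ∧ ∃ c₁ d₁ c₂ d₂ : Fin 2 → ℤ, ∀ r : ℕ,
      S.Conn (j, 0, r) ↔ ∃ g ∈ Subgroup.closure X, g ≠ 1 ∧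
        g.1.1 *ᵥ (fun i => ((c₁ i + d₁ i * r : ℤ) : ℚ)) = (fun i => ((c₁ i + d₁ i * r : ℤ) : ℚ)) ∧
        g.2.1 *ᵥ (fun i => ((c₂ i + d₂ i * r : ℤ) : ℚ)) =
          (fun i => ((c₂ i + d₂ i * r : ℤ) : ℚ)) := by
  obtain ⟨s', hs'⟩ := Countable.exists_injective_nat (Letter J R)
  let s : Letter J R → ℤ := fun l => s' l
  have hs : Function.Injective s := Nat.cast_injective.comp hs'
  let φ : FreeGroup (Letter J R) →* SL(2, ℚ) := FreeGroup.lift fun i => shear (s i) 6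
  let δ := s (.t j) - s .y
  let κ := s .k
  let shearInt : ℤ → ℤ → Fin 2 → ℤ := fun a b =>
    ![a + 6 * (b - κ * a), b + 6 * κ * (b - κ * a)]
  refine ⟨_, finite_fibreSquareGenerators φ S.finite_relators, ![1, s (.t j)],
    ![6 * δ, 6 * s .y * δ], shearInt 1 (s (.t j)), shearInt (6 * δ) (6 * s .y * δ), fun r => ?_⟩
  rw [conn_iff_exists_fixes S hs (φ := φ) rfl j (0, r) rfl]
  have h1 : (φ (.of .x ^ (0 : ℤ) * .of .y ^ (r : ℤ))).1 *ᵥ ![1, (s (.t j) : ℚ)] =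
      fun i => (((![1, s (.t j)] : Fin 2 → ℤ) i +
        (![6 * δ, 6 * s .y * δ] : Fin 2 → ℤ) i * r : ℤ) : ℚ) := by
    rw [zpow_zero, one_mul, map_zpow]
    simp only [φ, FreeGroup.lift_apply_of]
    rw [shear_zpow]
    refine (shear_mulVec _ _ _).trans ?_
    ext i
    fin_cases i <;> simp [δ] <;> ring
  have h2 : (φ (.of .k * (.of .x ^ (0 : ℤ) * .of .y ^ (r : ℤ)))).1 *ᵥ ![1, (s (.t j) : ℚ)] =
      fun i => ((shearInt 1 (s (.t j)) i + shearInt (6 * δ) (6 * s .y * δ) i * r : ℤ) : ℚ) := by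
    have hmul : ∀ a b, (φ (a * b)).1 = (φ a).1 * (φ b).1 := fun a b => by
      rw [map_mul, Matrix.SpecialLinearGroup.coe_mul]
    rw [hmul, ← mulVec_mulVec, h1]
    simp only [φ, FreeGroup.lift_apply_of]
    refine (shear_mulVec _ _ _).trans ?_
    ext i
    fin_cases i <;> simp [shearInt, κ] <;> ring
  simp only [h1, h2]

end StabilizerCriterion

section BlockEmbedding

open Matrix MatrixGroups

/-- Pairs of matrices in `SL(2, ℚ)` as block diagonal matrices completed by an identity block. -/
def blockEmbedding {m n : Type*} [Fintype m] [DecidableEq m] [Fintype n] [DecidableEq n]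
    (e : n ≃ (Fin 2 ⊕ Fin 2) ⊕ m) : SL(2, ℚ) × SL(2, ℚ) →* GL n ℚ :=
  MonoidHom.toHomUnits
    { toFun := fun g => (fromBlocks (fromBlocks g.1.1 0 0 g.2.1) 0 0 1).submatrix e e
      map_one' := by
        simp only [Prod.fst_one, Prod.snd_one, Matrix.SpecialLinearGroup.coe_one, fromBlocks_one,
          submatrix_one_equiv]
      map_mul' := fun g h => by
        simp only [Prod.fst_mul, Prod.snd_mul, Matrix.SpecialLinearGroup.coe_mul,
          submatrix_mul_equiv, fromBlocks_multiply]
        simp }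

variable {m n : Type*} [Fintype m] [DecidableEq m] [Fintype n] [DecidableEq n]
  (e : n ≃ (Fin 2 ⊕ Fin 2) ⊕ m)

theorem coe_blockEmbedding (g : SL(2, ℚ) × SL(2, ℚ)) : (blockEmbedding e g : Matrix n n ℚ) =
    (fromBlocks (fromBlocks g.1.1 0 0 g.2.1) 0 0 1).submatrix e e := rfl

theorem injective_blockEmbedding : Function.Injective (blockEmbedding e) := by
  intro g h hgh
  have h1 := congrArg Units.val hgh
  rw [coe_blockEmbedding, coe_blockEmbedding] at h1
  have h2 : fromBlocks (fromBlocks g.1.1 0 0 g.2.1) 0 0 1 =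
      fromBlocks (fromBlocks h.1.1 0 0 h.2.1) 0 0 (1 : Matrix m m ℚ) :=
    (Matrix.reindex e.symm e.symm).injective h1
  rw [fromBlocks_inj, fromBlocks_inj] at h2
  exact Prod.ext (Subtype.ext h2.1.1) (Subtype.ext h2.1.2.2.2)

theorem blockEmbedding_mulVec_eq_iff (g : SL(2, ℚ) × SL(2, ℚ)) (v w : Fin 2 → ℚ) :
    (blockEmbedding e g : Matrix n n ℚ) *ᵥ (Sum.elim (Sum.elim v w) 0 ∘ e) =
      Sum.elim (Sum.elim v w) 0 ∘ e ↔ g.1.1 *ᵥ v = v ∧ g.2.1 *ᵥ w = w := by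
  rw [coe_blockEmbedding, submatrix_mulVec_equiv, e.surjective.injective_comp_right.eq_iff,
    Function.comp_assoc, e.self_comp_symm, Function.comp_id, fromBlocks_mulVec,
    Sum.elim_eq_iff, Sum.elim_comp_inl, Sum.elim_comp_inr, fromBlocks_mulVec, zero_mulVec,
    zero_mulVec, one_mulVec, add_zero, zero_add, Sum.elim_comp_inl, Sum.elim_comp_inr]
  simp [Sum.elim_eq_iff]

end BlockEmbedding

open Matrix in
/-- If connectedness of a register system is undecidable along configurations `(j, 0, r n)`,
then so is the stabilizer problem in dimension at least `4`. -/
theorem not_exists_computable_stabilizer {J R : Type} [Finite J] [Finite R]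
    (S : RegisterSystem J R) (j : J) {r : ℕ → ℕ} (hr : Computable r)
    (hS : ¬ ComputablePred fun k => S.Conn (j, 0, r k)) {n : ℕ} (hn : 4 ≤ n) :
    ¬ ∃ f : List (Matrix (Fin n) (Fin n) ℚ) × (Fin n → ℚ) → Bool, Computable f ∧
      ∀ (X : List (Matrix (Fin n) (Fin n) ℚ)) (u : Fin n → ℚ),
        (∀ M ∈ X, IsUnit M) →
        (f (X, u) = true ↔
          ∃ g ∈ Subgroup.closure
              {g : GL (Fin n) ℚ | (g : Matrix (Fin n) (Fin n) ℚ) ∈ X},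
            g ≠ 1 ∧ (g : Matrix (Fin n) (Fin n) ℚ).mulVec u = u) := by
  classical
  rintro ⟨f, hf, hspec⟩
  obtain ⟨gens, hgens, c₁, d₁, c₂, d₂, hconn⟩ := exists_generators_conn_iff_fixes S j
  let e : Fin n ≃ (Fin 2 ⊕ Fin 2) ⊕ Fin (n - 4) :=
    (finCongr (by lia : n = 2 + 2 + (n - 4))).trans
      (finSumFinEquiv.symm.trans (finSumFinEquiv.symm.sumCongr (Equiv.refl _)))
  let X : List (Matrix (Fin n) (Fin n) ℚ) :=
    (hgens.image fun g => (blockEmbedding e g : Matrix (Fin n) (Fin n) ℚ)).toFinset.toList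
  have hX : {g : GL (Fin n) ℚ | (g : Matrix (Fin n) (Fin n) ℚ) ∈ X} = blockEmbedding e '' gens := by
    ext g
    simp [X, Units.ext_iff]
  have hXunit : ∀ M ∈ X, IsUnit M := by
    intro M hM
    obtain ⟨g, -, rfl⟩ : ∃ g ∈ gens, (blockEmbedding e g : Matrix (Fin n) (Fin n) ℚ) = M := by
      simpa [X] using hM
    exact Units.isUnit _
  let v : (Fin 2 → ℤ) → (Fin 2 → ℤ) → ℕ → Fin 2 → ℚ := fun c d k i => ((c i + d i * k : ℤ) : ℚ)
  let u : ℕ → Fin n → ℚ := fun k => Sum.elim (Sum.elim (v c₁ d₁ k) (v c₂ d₂ k)) 0 ∘ e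
  have hu : Primrec u := by
    refine Primrec.pi_fin fun i => ?_
    simp only [u, Function.comp_apply]
    rcases e i with (i | i) | i
    · exact Primrec.rat_affine _ _
    · exact Primrec.rat_affine _ _
    · exact Primrec.const 0
  refine hS (ComputablePred.computable_iff.2 ⟨fun k => f (X, u (r k)),
    hf.comp ((Computable.const X).pair (hu.to_comp.comp hr)), funext fun k => propext ?_⟩)
  rw [hspec X _ hXunit, hX, ← MonoidHom.map_closure, hconn]
  constructor
  · rintro ⟨g, hg, hg1, hfix⟩
    exact ⟨blockEmbedding e g, ⟨g, hg, rfl⟩,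
      fun h => hg1 (injective_blockEmbedding e (h.trans (map_one _).symm)),
      (blockEmbedding_mulVec_eq_iff e g _ _).2 hfix⟩
  · rintro ⟨_, ⟨g, hg, rfl⟩, hg1, hfix⟩
    exact ⟨g, hg, fun h => hg1 (by rw [h, map_one]), (blockEmbedding_mulVec_eq_iff e g _ _).1 hfix⟩

section TuringMachines

open Turing StateTransition

variable {Γ : Type} {B : ℕ}

namespace Turing.ListBlank

variable [Inhabited Γ]

/-- The number whose base-`B` digits, least significant first, encode the half-tape `L`. -/
def toNat {e : Γ → Fin B} (he : (e default : ℕ) = 0) (L : ListBlank Γ) : ℕ :=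
  L.liftOn (List.foldr (fun c n => e c + B * n) 0) <| by
    rintro l _ ⟨n, rfl⟩
    have h0 : List.foldr (fun c n => (e c : ℕ) + B * n) 0 (List.replicate n default) = 0 := by
      induction n with
      | zero => rfl
      | succ n ih => rw [List.replicate_succ, List.foldr_cons, ih, he, Nat.mul_zero]
    rw [List.foldr_append, h0]

variable {e : Γ → Fin B} (he : (e default : ℕ) = 0)

theorem toNat_mk (l : List Γ) :
    (mk l).toNat he = l.foldr (fun c n => (e c : ℕ) + B * n) 0 := rfl

@[simp]
theorem toNat_cons (c : Γ) (L : ListBlank Γ) : (L.cons c).toNat he = e c + B * L.toNat he := by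
  induction L using ListBlank.induction_on with
  | h l => rfl

theorem toNat_eq_iff (hinj : Function.Injective e) {L : ListBlank Γ} {c : Γ} {k : ℤ} :
    (L.toNat he : ℤ) = e c + B * k ↔ ∃ L' : ListBlank Γ, L = L'.cons c ∧ (L'.toNat he : ℤ) = k := by
  constructor
  · intro h
    refine ⟨L.tail, ?_⟩
    obtain ⟨d, L, rfl⟩ := L.exists_cons
    rw [tail_cons]
    rw [toNat_cons] at h
    have hd := congrArg (· % (B : ℤ)) h
    push_cast at h hd
    simp only [Int.add_mul_emod_self_left] at hd
    rw [Int.emod_eq_of_lt (by positivity) (by exact_mod_cast (e d).2),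
      Int.emod_eq_of_lt (by positivity) (by exact_mod_cast (e c).2), Nat.cast_inj] at hd
    rw [hinj (Fin.ext hd)] at h ⊢
    exact ⟨rfl, mul_left_cancel₀ (by exact_mod_cast (e c).pos.ne') (add_left_cancel h)⟩
  · rintro ⟨L, rfl, rfl⟩
    simp

theorem toNat_injective (hinj : Function.Injective e) : Function.Injective (toNat he) := by
  have key (n : ℕ) : ∀ L L' : ListBlank Γ, L.toNat he = L'.toNat he → L.nth n = L'.nth n := by
    induction n with
    | zero =>
      intro L L' h
      obtain ⟨c, L', rfl⟩ := L'.exists_cons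
      rw [toNat_cons] at h
      obtain ⟨L, rfl, -⟩ :=
        (toNat_eq_iff he hinj (c := c) (k := L'.toNat he)).1 (by exact_mod_cast h)
      simp
    | succ n ih =>
      intro L L' h
      obtain ⟨c, L', rfl⟩ := L'.exists_cons
      rw [toNat_cons] at h
      obtain ⟨L, rfl, hL⟩ :=
        (toNat_eq_iff he hinj (c := c) (k := L'.toNat he)).1 (by exact_mod_cast h)
      simpa [nth_succ] using ih L L' (by exact_mod_cast hL)
  exact fun L L' h => ListBlank.ext fun n => key n L L' h

end Turing.ListBlank

namespace Turing.TM0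

variable {Λ : Type} [Inhabited Λ] (M : Machine Γ Λ) (e : Γ → Fin B)

/-- Both sides of each rule of the register system simulating a Turing machine, given the value of
its transition function at the state `q` and the symbol `a`. The registers hold the two half-tapes.
A rule that moves the head is indexed by the symbol `c` the head moves to; in halting states, the
rules indexed by `c` erase the symbol `c` next to the head. -/
def rule (q : Λ) (a c : Γ) :
    Option (Λ × Stmt Γ) → Bool → ConfigFamily (Λ × Γ) × ConfigFamily (Λ × Γ)
  | none, false => (⟨(q, a), B, 1, e c, 0⟩, ⟨(q, a), 1, 1, 0, 0⟩)
  | none, true => (⟨(q, a), 1, B, 0, e c⟩, ⟨(q, a), 1, 1, 0, 0⟩)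
  | some (q', .write b), _ => (⟨(q, a), 1, 1, 0, 0⟩, ⟨(q', b), 1, 1, 0, 0⟩)
  | some (q', .move .right), _ => (⟨(q, a), 1, B, 0, e c⟩, ⟨(q', c), B, 1, e a, 0⟩)
  | some (q', .move .left), _ => (⟨(q, a), B, 1, e c, 0⟩, ⟨(q', c), 1, B, 0, e a⟩)

/-- The register system simulating the Turing machine `M`. -/
def registerSystem : RegisterSystem (Λ × Γ) ((Λ × Γ) × Γ × Bool) where
  src i := (rule e i.1.1 i.1.2 i.2.1 (M i.1.1 i.1.2) i.2.2).1
  dst i := (rule e i.1.1 i.1.2 i.2.1 (M i.1.1 i.1.2) i.2.2).2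
  base := {j | M j.1 j.2 = none}

variable {M e} in
theorem conn_rule {q : Λ} {a : Γ} {o : Option (Λ × Stmt Γ)} (h : M q a = o) (c : Γ) (s : Bool)
    (k : ℤ × ℤ) (hk : (registerSystem M e).Conn ((rule e q a c o s).2.point k)) :
    (registerSystem M e).Conn ((rule e q a c o s).1.point k) := by
  subst h
  exact RegisterSystem.Conn.bwd (S := registerSystem M e) ((q, a), c, s) k hk

open ListBlank

variable [Inhabited Γ] {e} (he : (e default : ℕ) = 0)

/-- The configuration of the simulating register system that represents `c`. -/
def encodeCfg (c : Cfg Γ Λ) : (Λ × Γ) × ℤ × ℤ :=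
  ((c.q, c.Tape.head), (c.Tape.left.toNat he, c.Tape.right.toNat he))

/-- The configurations of the register system representing a halting configuration of `M`. -/
def HaltingPoint (p : (Λ × Γ) × ℤ × ℤ) : Prop :=
  ∃ L R : ListBlank Γ, (L.toNat he : ℤ) = p.2.1 ∧ (R.toNat he : ℤ) = p.2.2 ∧
    (StateTransition.eval (step M) ⟨p.1.1, p.1.2, L, R⟩).Dom

theorem haltingPoint_rule (hinj : Function.Injective e) (q : Λ) (a c : Γ) (s : Bool) (k : ℤ × ℤ) :
    HaltingPoint M he ((rule e q a c (M q a) s).1.point k) ↔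
      HaltingPoint M he ((rule e q a c (M q a) s).2.point k) := by
  obtain ⟨k₁, k₂⟩ := k
  have hstep {c c' : Cfg Γ Λ} (h : step M c = some c') :
      (StateTransition.eval (step M) c).Dom ↔
      (StateTransition.eval (step M) c').Dom := by
    rw [reaches_eval (Relation.ReflTransGen.single h)]
  have hhalt (h : M q a = none) (L R) :
      (StateTransition.eval (step M) ⟨q, a, L, R⟩).Dom :=
    Part.dom_iff_mem.2 ⟨_, mem_eval.2 ⟨.refl, by simp [step, h]⟩⟩
  rcases h : M q a with _ | ⟨q', (_ | _) | b⟩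
  · rcases s with _ | _ <;>
    simp only [HaltingPoint, rule, ConfigFamily.point, ConfigFamily.regs, hhalt h, and_true,
      toNat_eq_iff he hinj, Fin.val_zero, Nat.cast_zero, Nat.cast_one, one_mul, zero_add]
    · constructor
      · rintro ⟨_, R, ⟨L, rfl, hL⟩, hR⟩
        exact ⟨L, R, hL, hR⟩
      · rintro ⟨L, R, hL, hR⟩
        exact ⟨L.cons c, R, ⟨L, rfl, hL⟩, hR⟩
    · constructor
      · rintro ⟨L, _, hL, R, rfl, hR⟩
        exact ⟨L, R, hL, hR⟩
      · rintro ⟨L, R, hL, hR⟩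
        exact ⟨L, R.cons c, hL, R, rfl, hR⟩
  · simp only [HaltingPoint, rule, ConfigFamily.point, ConfigFamily.regs,
      toNat_eq_iff he hinj, Fin.val_zero, Nat.cast_zero, Nat.cast_one, one_mul, zero_add]
    have hs (L R : ListBlank Γ) :
        step M ⟨q, a, L.cons c, R⟩ = some ⟨q', c, L, R.cons a⟩ := by
      simp [step, h, Tape.move]
    constructor
    · rintro ⟨_, R, ⟨L, rfl, hL⟩, hR, hd⟩
      exact ⟨L, R.cons a, hL, ⟨R, rfl, hR⟩, (hstep (hs L R)).1 hd⟩
    · rintro ⟨L, _, hL, ⟨R, rfl, hR⟩, hd⟩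
      exact ⟨L.cons c, R, ⟨L, rfl, hL⟩, hR, (hstep (hs L R)).2 hd⟩
  · simp only [HaltingPoint, rule, ConfigFamily.point, ConfigFamily.regs,
      toNat_eq_iff he hinj, Fin.val_zero, Nat.cast_zero, Nat.cast_one, one_mul, zero_add]
    have hs (L R : ListBlank Γ) :
        step M ⟨q, a, L, R.cons c⟩ = some ⟨q', c, L.cons a, R⟩ := by
      simp [step, h, Tape.move]
    constructor
    · rintro ⟨L, _, hL, ⟨R, rfl, hR⟩, hd⟩
      exact ⟨L.cons a, R, ⟨L, rfl, hL⟩, hR, (hstep (hs L R)).1 hd⟩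
    · rintro ⟨_, R, ⟨L, rfl, hL⟩, hR, hd⟩
      exact ⟨L, R.cons c, hL, ⟨R, rfl, hR⟩, (hstep (hs L R)).2 hd⟩
  · simp only [HaltingPoint, rule, ConfigFamily.point, ConfigFamily.regs]
    have hs (L R : ListBlank Γ) : step M ⟨q, a, L, R⟩ = some ⟨q', b, L, R⟩ := by
      simp [step, h, Tape.write]
    simp only [hstep (hs _ _)]

theorem conn_of_halted {q : Λ} {a : Γ} (h : M q a = none) (L R : ListBlank Γ) :
    (registerSystem M e).Conn (encodeCfg he ⟨q, a, L, R⟩) := by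
  have h0 : (ListBlank.mk [] : ListBlank Γ).toNat he = 0 := rfl
  have key (L R : List Γ) :
      (registerSystem M e).Conn (encodeCfg he ⟨q, a, ListBlank.mk L, ListBlank.mk R⟩) := by
    induction L with
    | cons c L ih =>
      have := conn_rule (e := e) h c false ((ListBlank.mk L).toNat he, (ListBlank.mk R).toNat he)
      simp only [rule, ConfigFamily.point, ConfigFamily.regs] at this
      simpa [encodeCfg, ← ListBlank.cons_mk] using this (by simpa [encodeCfg] using ih)
    | nil =>
      induction R with
      | cons c R ih =>
        have := conn_rule (e := e) h c true (0, (ListBlank.mk R).toNat he)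
        simp only [rule, ConfigFamily.point, ConfigFamily.regs] at this
        simpa [encodeCfg, ← ListBlank.cons_mk, h0] using
          this (by simpa [encodeCfg, h0] using ih)
      | nil => simpa [encodeCfg, h0] using RegisterSystem.Conn.base (S := registerSystem M e) h
  induction L using ListBlank.induction_on with
  | h L =>
    induction R using ListBlank.induction_on with
    | h R => exact key L R

theorem conn_of_conn_step {c c' : Cfg Γ Λ} (h : step M c = some c')
    (hc : (registerSystem M e).Conn (encodeCfg he c')) :
    (registerSystem M e).Conn (encodeCfg he c) := by
  obtain ⟨q, a, L, R⟩ := c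
  obtain ⟨cL, L, rfl⟩ := L.exists_cons
  obtain ⟨cR, R, rfl⟩ := R.exists_cons
  rcases h' : M q a with _ | ⟨q', (_ | _) | b⟩
  · simp [step, h'] at h
  · obtain rfl : _ = c' := by simpa [step, h', Tape.move] using h
    have := conn_rule (e := e) h' cL false (L.toNat he, (R.cons cR).toNat he)
    simp only [rule, ConfigFamily.point, ConfigFamily.regs] at this
    simpa [encodeCfg] using this (by simpa [encodeCfg] using hc)
  · obtain rfl : _ = c' := by simpa [step, h', Tape.move] using h
    have := conn_rule (e := e) h' cR false ((L.cons cL).toNat he, R.toNat he)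
    simp only [rule, ConfigFamily.point, ConfigFamily.regs] at this
    simpa [encodeCfg] using this (by simpa [encodeCfg] using hc)
  · obtain rfl : _ = c' := by simpa [step, h', Tape.write] using h
    have := conn_rule (e := e) h' a false ((L.cons cL).toNat he, (R.cons cR).toNat he)
    simp only [rule, ConfigFamily.point, ConfigFamily.regs] at this
    simpa [encodeCfg] using this (by simpa [encodeCfg] using hc)

/-- Connectedness in the register system simulating `M` is halting of `M`. -/
theorem conn_encodeCfg_iff (hinj : Function.Injective e) (c : Cfg Γ Λ) :
    (registerSystem M e).Conn (encodeCfg he c) ↔ (StateTransition.eval (step M) c).Dom := by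
  constructor
  · have key (p) (hp : (registerSystem M e).Conn p) : HaltingPoint M he p := by
      induction hp with
      | @base j hj =>
        exact ⟨ListBlank.mk [], ListBlank.mk [], rfl, rfl,
          Part.dom_iff_mem.2 ⟨_, mem_eval.2 ⟨.refl, by
            simp only [step, show M j.1 j.2 = none from hj, Option.map_none]⟩⟩⟩
      | fwd i k _ ih => exact (haltingPoint_rule M he hinj _ _ _ _ k).1 ih
      | bwd i k _ ih => exact (haltingPoint_rule M he hinj _ _ _ _ k).2 ih
    intro h
    obtain ⟨L, R, hL, hR, hd⟩ := key _ h
    obtain ⟨q, a, L', R'⟩ := c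
    rwa [toNat_injective he hinj (Nat.cast_injective hL),
      toNat_injective he hinj (Nat.cast_injective hR)] at hd
  · intro h
    obtain ⟨b, hb⟩ := Part.dom_iff_mem.1 h
    refine evalInduction hb fun c hc ih => ?_
    rcases h : step M c with _ | c'
    · exact conn_of_halted M he (by simpa [step] using h) _ _
    · exact conn_of_conn_step M he h (ih c' h)

end Turing.TM0

end TuringMachines

section Undecidability

open Turing StateTransition

theorem Turing.TM0.exists_registerSystem {Γ Λ : Type} [Inhabited Γ] [Finite Γ] [Inhabited Λ]
    (M : TM0.Machine Γ Λ) {S : Finset Λ} (hS : TM0.Supports M (S : Set Λ)) {q : Λ} (hq : q ∈ S)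
    (a : Γ) :
    ∃ (J R : Type) (_ : Finite J) (_ : Finite R) (T : RegisterSystem J R) (j : J) (B : ℕ)
      (e : Γ → Fin B) (he : (e default : ℕ) = 0), ∀ R : ListBlank Γ,
        T.Conn (j, 0, R.toNat he) ↔
          (StateTransition.eval (TM0.step M) ⟨q, a, ListBlank.mk [], R⟩).Dom := by
  classical
  have : NeZero (Nat.card Γ) := ⟨Nat.card_pos.ne'⟩
  let e : Γ ≃ Fin (Nat.card Γ) :=
    (Finite.equivFin Γ).trans (Equiv.swap (Finite.equivFin Γ default) 0)
  have he : (e default : ℕ) = 0 := by simp [e]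
  let _ : Inhabited S := ⟨⟨default, hS.1⟩⟩
  let id' : PointedMap Γ Γ := ⟨id, rfl⟩
  let g : PointedMap Λ S :=
    ⟨fun q => if h : q ∈ S then ⟨q, h⟩ else default, dif_pos hS.1⟩
  let M' := M.map id' id' g Subtype.val
  have hM (c : TM0.Cfg Γ Λ) (hc : c.q ∈ S) :
      (StateTransition.eval (TM0.step M') (c.map id' g)).Dom ↔
        (StateTransition.eval (TM0.step M) c).Dom :=
    tr_eval_dom (TM0.Machine.map_respects M id' id' g Subtype.val hS (fun _ => rfl)
      fun q hq => by simp [g, Finset.mem_coe.1 hq]) ⟨hc, rfl⟩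
  refine ⟨S × Γ, (S × Γ) × Γ × Bool, inferInstance, inferInstance, TM0.registerSystem M' e,
    (g q, a), _, e, he, fun R => ?_⟩
  rw [← hM _ hq, ← TM0.conn_encodeCfg_iff M' he e.injective]
  have hid (L : ListBlank Γ) : L.map id' = L := by
    ext i
    rw [ListBlank.nth_map]
    rfl
  simp only [TM0.encodeCfg, TM0.Cfg.map, Tape.map, hid]
  rfl

open PartrecToTM2 in
theorem Turing.PartrecToTM2.trNat_of_ne_zero {n : ℕ} (hn : n ≠ 0) :
    trNat n = (if n % 2 = 0 then Γ'.bit0 else Γ'.bit1) :: trNat (n / 2) := by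
  have h (N : Num) : trNat N = trNum N := by rw [trNat, Num.of_to_nat]
  obtain ⟨N, rfl⟩ : ∃ N : Num, n = N := ⟨n, (Num.to_of_nat n).symm⟩
  obtain _ | p := N
  · exact absurd rfl hn
  · have h2 (m k : ℕ) (p : PosNum) (hm : m = 2 * p + k) (hk : k < 2) :
      trNat (m / 2) = trPosNum p ∧ m % 2 = k := by
      refine ⟨?_, by lia⟩
      rw [show m / 2 = ((Num.pos p : Num) : ℕ) by rw [Num.cast_pos]; lia, h]
      rfl
    rw [h]
    obtain _ | p | p := p
    · simp [trNum, trPosNum]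
    · obtain ⟨h3, h4⟩ := h2 (Num.pos p.bit1 : Num) 1 p
        (by rw [Num.cast_pos, PosNum.cast_bit1]; lia) (by simp)
      rw [h3, h4]
      rfl
    · obtain ⟨h3, h4⟩ := h2 (Num.pos p.bit0 : Num) 0 p
        (by rw [Num.cast_pos, PosNum.cast_bit0]; lia) (by simp)
      rw [h3, h4]
      rfl

open PartrecToTM2 in
theorem primrec_foldl_trNat (f : Γ' → ℕ) (B : ℕ) :
    Primrec fun n => (trNat n).foldl (fun m s => f s + B * m) 0 := by
  let F (p : ℕ × ℕ) : ℕ × ℕ := if p.1 = 0 then p else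
    (p.1 / 2, (if p.1 % 2 = 0 then f .bit0 else f .bit1) + B * p.2)
  have hF : Primrec F := by
    have hz : PrimrecPred fun p : ℕ × ℕ => p.1 = 0 :=
      Primrec.eq.comp Primrec.fst (Primrec.const 0)
    have hm : PrimrecPred fun p : ℕ × ℕ => p.1 % 2 = 0 :=
      Primrec.eq.comp (Primrec.nat_mod.comp Primrec.fst (Primrec.const 2)) (Primrec.const 0)
    exact .ite hz .id (.pair (Primrec.nat_div.comp .fst (.const 2))
      (Primrec.nat_add.comp (.ite hm (.const _) (.const _))
        (Primrec.nat_mul.comp (.const B) .snd)))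
  have key (k : ℕ) : ∀ n acc, n ≤ k →
      (F^[k] (n, acc)).2 = (trNat n).foldl (fun m s => f s + B * m) acc := by
    induction k with
    | zero =>
      intro n acc hn
      obtain rfl := Nat.le_zero.1 hn
      simp
    | succ k ih =>
      intro n acc hn
      rw [Function.iterate_succ_apply]
      by_cases h0 : n = 0
      · subst h0
        exact ih 0 acc (Nat.zero_le k)
      · simp only [F, if_neg h0]
        rw [ih _ _ (by lia), trNat_of_ne_zero h0, List.foldl_cons, apply_ite f]
  refine (Primrec.snd.comp (Primrec.nat_iterate .id (.pair .id (.const 0))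
    (hF.comp .snd).to₂)).of_eq fun n => key n n 0 le_rfl

theorem Turing.ToPartrec.exists_code_undecidable :
    ∃ c : ToPartrec.Code, ¬ ComputablePred fun n : ℕ => (c.eval [n]).Dom := by
  have hf : Partrec fun n : ℕ => (Denumerable.ofNat Nat.Partrec.Code n).eval 0 :=
    Nat.Partrec.Code.eval_part.comp (Computable.ofNat _) (Computable.const 0)
  obtain ⟨c, hc⟩ := ToPartrec.Code.exists_code (Nat.Partrec'.part_iff₁.2 hf)
  refine ⟨c, fun h => ComputablePred.halting_problem 0 ?_⟩
  refine ComputablePred.computable_of_manyOneReducible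
    ⟨Encodable.encode, Computable.encode, fun d => ?_⟩ h
  have := hc ⟨[Encodable.encode d], rfl⟩
  simp only at this
  rw [this]
  simp [List.Vector.head]

open PartrecToTM2 in
theorem exists_undecidable_registerSystem :
    ∃ (J R : Type) (_ : Finite J) (_ : Finite R) (S : RegisterSystem J R) (j : J) (r : ℕ → ℕ),
      Computable r ∧ ¬ ComputablePred fun k => S.Conn (j, 0, r k) := by
  classical
  obtain ⟨c, hc⟩ := ToPartrec.exists_code_undecidable
  let _ : Inhabited PartrecToTM2.Λ' := ⟨PartrecToTM2.trNormal c .halt⟩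
  have : Fintype K' := ⟨{.main, .rev, .aux, .stack}, fun k => by cases k <;> simp⟩
  have : Finite (TM2to1.Γ' K' fun _ => PartrecToTM2.Γ') := Finite.of_fintype _
  let M₁ := TM2to1.tr PartrecToTM2.tr
  let u (s : PartrecToTM2.Γ') : ∀ _ : K', Option PartrecToTM2.Γ' :=
    Function.update default .main (some s)
  let sym (b : Bool) (s : PartrecToTM2.Γ') : TM2to1.Γ' K' fun _ => PartrecToTM2.Γ' := (b, u s)
  have hS := TM1to0.tr_supports M₁
    (TM2to1.tr_supports PartrecToTM2.tr (PartrecToTM2.tr_supports c .halt))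
  obtain ⟨J, R, hJ, hR, S, j, B, e, he, hconn⟩ :=
    TM0.exists_registerSystem _ hS hS.1 (sym true .cons)
  refine ⟨J, R, hJ, hR, S, j, _,
    (primrec_foldl_trNat (fun s => (e (sym false s) : ℕ)) B).to_comp,
    fun h => hc (h.of_eq fun n => ?_)⟩
  have hr : ((trNat n).foldl (fun m s => (e (sym false s) : ℕ) + B * m) 0 : ℕ) =
      (ListBlank.mk ((trNat n).reverse.map (sym false))).toNat he := by
    rw [ListBlank.toNat_mk, List.foldr_map, List.foldr_reverse]
  let L : ListBlank (∀ _ : K', Option PartrecToTM2.Γ') := ListBlank.mk ((trList [n]).reverse.map u)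
  have hL (k : K') : L.map (proj k) =
      ListBlank.mk ((K'.elim (trList [n]) [] [] [] k).map some).reverse := by
    rw [ListBlank.map_mk, ← List.map_reverse, List.map_map]
    cases k
    · rfl
    all_goals
      refine ListBlank.ext fun i => ?_
      rw [ListBlank.nth_mk, ListBlank.nth_mk, List.getI_eq_getElem?_getD, List.getElem?_map]
      cases (trList [n]).reverse[i]? <;> rfl
  have h21 := tr_eval_dom (TM2to1.tr_respects PartrecToTM2.tr)
    (TM2to1.TrCfg.mk (q := some (PartrecToTM2.trNormal c .halt)) (v := none) L hL)
  have h10 := tr_eval_dom (TM1to0.tr_respects M₁)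
    (rfl : TM1to0.trCfg M₁ ⟨some (.normal (PartrecToTM2.trNormal c .halt)), none,
      Tape.mk' ∅ (TM2to1.addBottom L)⟩ = _)
  have htape : Tape.mk' ∅ (TM2to1.addBottom L) = ⟨sym true .cons, ListBlank.mk [],
      ListBlank.mk ((trNat n).reverse.map (sym false))⟩ := by
    have : (trList [n]).reverse = .cons :: (trNat n).reverse := by simp [trList]
    have hsym : (trNat n).reverse.map (sym false) =
        ((trNat n).reverse.map u).map (Prod.mk false) := List.map_map.symm
    simp only [L, this, hsym, List.map_cons, ← ListBlank.cons_mk, TM2to1.addBottom,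
      ListBlank.head_cons, ListBlank.tail_cons, ListBlank.map_mk]
    rfl
  rw [htape] at h10 h21
  have hc2 := PartrecToTM2.tr_eval c [n]
  rw [hr, hconn]
  refine (h10.trans h21).trans ?_
  erw [hc2]
  rfl

end Undecidability

/-- **Undecidability of the stabilizer problem over `ℚ`.**
For `n ≥ 9`, there is no computable function that, given a finite list `X` of
invertible `n × n` rational matrices together with a vector `u ∈ ℚⁿ`, decides
whether some non-identity element of the subgroup of `GL_n(ℚ)` generated by
`X` fixes `u`. -/
theorem stabilizer_problem_undecidable (n : ℕ) (hn : 9 ≤ n) :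
    ¬ ∃ f : List (Matrix (Fin n) (Fin n) ℚ) × (Fin n → ℚ) → Bool, Computable f ∧
      ∀ (X : List (Matrix (Fin n) (Fin n) ℚ)) (u : Fin n → ℚ),
        (∀ M ∈ X, IsUnit M) →
        (f (X, u) = true ↔
          ∃ g ∈ Subgroup.closure
              {g : GL (Fin n) ℚ | (g : Matrix (Fin n) (Fin n) ℚ) ∈ X},
            g ≠ 1 ∧ (g : Matrix (Fin n) (Fin n) ℚ).mulVec u = u) := by
  obtain ⟨J, R, _, _, S, j, r, hr, hS⟩ := exists_undecidable_registerSystem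
  exact not_exists_computable_stabilizer S j hr hS (by lia)
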